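/- arXiv:2501.11991 — 4 statements merged into one kernel-verified Lean document; each statement's English description precedes it below -/
import Mathlib

section
/- Let k ≥ 2 be an integer. Set φ = (1 - x(t-1))/(2x(t-1)) and γ(x,t) = k/(1 - 3x(t-1)) - (2x(t-1)/(1 - 3x(t-1))²)·(U_k(φ) - U_{k-1}(φ) - 1)/U_k(φ). Then the two-variable generating function F_k(x,t) = Σ_{n≥0} (Σ_{w∈[k]^n} t^{s(w)}) x^n satisfies F_k(x,t) = 1/(1 - x·γ(x,t)), as an identity of (formal) series wherever the right-hand side is defined (i.e., for parameter values with x(t-1) ≠ 0, 1 - 3x(t-1) ≠ 0, U_k(φ) ≠ 0, and 1 - xγ(x,t) ≠ 0). -/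
/-- Evaluation of the Chebyshev polynomial of the second kind `U_n` at a real `x`
(indices extended to all integers via the Chebyshev recurrence). -/
noncomputable def chebU (n : ℤ) (x : ℝ) : ℝ := (Polynomial.Chebyshev.U ℝ n).eval x

/-- The statistic `s(w)`: the number of indices `1 ≤ i ≤ n-1` with `|w_{i+1} - w_i| ≤ 1`,
for a word `w` of length `n` over the alphabet `{1,…,k}` (encoded as `Fin n → Fin k`). -/
def statS {k n : ℕ} (w : Fin n → Fin k) : ℕ :=
  (Finset.univ.filter fun i : Fin (n - 1) =>
    |((w ⟨(i : ℕ) + 1, by have := i.isLt; omega⟩ : ℕ) : ℤ) -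
      ((w ⟨(i : ℕ), by have := i.isLt; omega⟩ : ℕ) : ℤ)| ≤ 1).card

/-- `φ = (1 - x(t-1))/(2x(t-1))`. -/
noncomputable def phi (x t : ℝ) : ℝ := (1 - x * (t - 1)) / (2 * x * (t - 1))

/-- `γ(x,t) = k/(1 - 3x(t-1)) - (2x(t-1)/(1 - 3x(t-1))²)·(U_k(φ) - U_{k-1}(φ) - 1)/U_k(φ)`. -/
noncomputable def gam (k : ℕ) (x t : ℝ) : ℝ :=
  (k : ℝ) / (1 - 3 * x * (t - 1)) -
    2 * x * (t - 1) / (1 - 3 * x * (t - 1)) ^ 2 *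
      ((chebU (k : ℤ) (phi x t) - chebU ((k : ℤ) - 1) (phi x t) - 1) / chebU (k : ℤ) (phi x t))

open Polynomial in
lemma chebU_rec (n : ℤ) (x : ℝ) : chebU (n + 1) x + chebU (n - 1) x = 2 * x * chebU n x := by
  have h := congrArg (Polynomial.eval x) (Polynomial.Chebyshev.U_add_one ℝ n)
  simp at h
  simp only [chebU]
  linarith

lemma chebU_neg_one (x : ℝ) : chebU (-1) x = 0 := by simp [chebU]

lemma chebU_zero (x : ℝ) : chebU 0 x = 1 := by simp [chebU]

lemma chebU_sum (k : ℕ) (x : ℝ) :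
    (2 * x - 2) * ∑ i ∈ Finset.range k, chebU (i : ℤ) x
      = chebU (k : ℤ) x - chebU ((k : ℤ) - 1) x - 1 := by
  induction k with
  | zero => simp [chebU]
  | succ n ih =>
    rw [Finset.sum_range_succ, mul_add, ih]
    have h := chebU_rec (n : ℤ) x
    push_cast
    rw [add_sub_cancel_right]
    linarith

lemma statS_cons {k n : ℕ} (a : Fin k) (w : Fin (n + 1) → Fin k) :
    statS (Fin.cons a w : Fin (n + 2) → Fin k)
      = (if |((w 0 : ℕ) : ℤ) - ((a : ℕ) : ℤ)| ≤ 1 then 1 else 0) + statS w := by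
  unfold statS
  rw [Finset.card_filter, Finset.card_filter]
  change (∑ i : Fin (n + 1), _) = _ + ∑ i : Fin n, _
  rw [Fin.sum_univ_succ]
  rfl

lemma sum_words_succ {k n : ℕ} (f : (Fin (n + 1) → Fin k) → ℝ) :
    ∑ w, f w = ∑ a : Fin k, ∑ w : Fin n → Fin k, f (Fin.cons a w) := by
  rw [← Fintype.sum_prod_type']
  exact (Fintype.sum_equiv (Fin.consEquiv (fun _ => Fin k)) _ _ (fun _ => rfl)).symm

/-- weighted count of words of length `n+1` starting with `a`. -/
noncomputable def aW (k : ℕ) (t : ℝ) (n : ℕ) (a : Fin k) : ℝ :=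
  ∑ w : Fin n → Fin k, t ^ statS (Fin.cons a w : Fin (n + 1) → Fin k)

lemma aW_zero (k : ℕ) (t : ℝ) (a : Fin k) : aW k t 0 a = 1 := by
  simp [aW, statS]

lemma sum_aW (k : ℕ) (t : ℝ) (n : ℕ) :
    ∑ w : Fin (n + 1) → Fin k, t ^ statS w = ∑ a, aW k t n a := by
  rw [sum_words_succ]; rfl

lemma aW_succ (k : ℕ) (t : ℝ) (n : ℕ) (a : Fin k) :
    aW k t (n + 1) a = ∑ b : Fin k,
      (if |((b : ℕ) : ℤ) - ((a : ℕ) : ℤ)| ≤ 1 then t else 1) * aW k t n b := by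
  rw [aW, sum_words_succ]
  refine Finset.sum_congr rfl fun b _ => ?_
  rw [aW, Finset.mul_sum]
  refine Finset.sum_congr rfl fun w _ => ?_
  rw [statS_cons, pow_add, Fin.cons_zero]
  split_ifs <;> simp

lemma aW_bound (k : ℕ) (t : ℝ) (n : ℕ) (a : Fin k) :
    |aW k t n a| ≤ (k * (1 + |t|)) ^ n := by
  induction n generalizing a with
  | zero => simp [aW_zero]
  | succ n ih =>
    rw [aW_succ]
    calc _ ≤ ∑ b : Fin k, |(if |((b : ℕ) : ℤ) - ((a : ℕ) : ℤ)| ≤ 1 then t else 1) * aW k t n b| :=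
          Finset.abs_sum_le_sum_abs _ _
      _ ≤ ∑ b : Fin k, (1 + |t|) * (k * (1 + |t|)) ^ n := by
          refine Finset.sum_le_sum fun b _ => ?_
          rw [abs_mul]
          refine mul_le_mul ?_ (ih b) (abs_nonneg _) (by positivity)
          split_ifs
          · linarith
          · rw [abs_one]; linarith [abs_nonneg t]
      _ = _ := by
          simp only [Finset.sum_const, Finset.card_univ, Fintype.card_fin, nsmul_eq_mul]; ring

lemma sum_pick (k : ℕ) (f : ℤ → ℝ) (m : ℤ) (hm : -1 ≤ m) (hm' : m ≤ k) (h0 : f (-1) = 0)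
    (hk : f k = 0) : ∑ i ∈ Finset.range k, (if (i : ℤ) = m then f i else 0) = f m := by
  by_cases h : 0 ≤ m ∧ m < k
  · rw [Finset.sum_eq_single m.toNat]
    · have : ((m.toNat : ℕ) : ℤ) = m := by omega
      simp [this]
    · intro b _ hb
      rw [if_neg]; omega
    · intro hb
      simp at hb; omega
  · rw [Finset.sum_eq_zero]
    · have : m = -1 ∨ m = k := by omega
      rcases this with rfl | rfl
      · exact h0.symm
      · exact hk.symm
    · intro i hi
      simp at hi
      rw [if_neg]; omega

lemma sum_adj (k : ℕ) (f : ℤ → ℝ) (h0 : f (-1) = 0) (hk : f k = 0) (j : Fin k) :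
    ∑ i : Fin k, (if |((j : ℕ) : ℤ) - ((i : ℕ) : ℤ)| ≤ 1 then f (i : ℕ) else 0)
      = f ((j : ℕ) - 1) + f (j : ℕ) + f ((j : ℕ) + 1) := by
  have hj := j.isLt
  rw [← sum_pick k f ((j : ℕ) - 1) (by omega) (by omega) h0 hk,
    ← sum_pick k f ((j : ℕ)) (by omega) (by omega) h0 hk,
    ← sum_pick k f ((j : ℕ) + 1) (by omega) (by omega) h0 hk,
    ← Finset.sum_add_distrib, ← Finset.sum_add_distrib,
    Fin.sum_univ_eq_sum_range
      (fun i : ℕ => if |((j : ℕ) : ℤ) - (i : ℤ)| ≤ 1 then f (i : ℤ) else 0) k]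
  refine Finset.sum_congr rfl fun i _ => ?_
  by_cases h : |((j : ℕ) : ℤ) - (i : ℤ)| ≤ 1
  · rw [if_pos h]
    rw [abs_le] at h
    have : (i : ℤ) = (j : ℕ) - 1 ∨ (i : ℤ) = (j : ℕ) ∨ (i : ℤ) = (j : ℕ) + 1 := by omega
    rcases this with h | h | h
    · rw [if_pos h, if_neg (by omega), if_neg (by omega)]; ring
    · rw [if_neg (by omega), if_pos h, if_neg (by omega)]; ring
    · rw [if_neg (by omega), if_neg (by omega), if_pos h]; ring
  · rw [if_neg h]
    rw [abs_le] at h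
    rw [if_neg (by omega), if_neg (by omega), if_neg (by omega)]; ring

/-- the explicit solution of the tridiagonal system. -/
noncomputable def uF (k : ℕ) (x t : ℝ) (i : ℤ) : ℝ :=
  (1 - (chebU i (phi x t) + chebU (k - 1 - i) (phi x t)) / chebU k (phi x t))
    / (1 - 3 * x * (t - 1))

lemma uF_left (k : ℕ) (x t : ℝ) (hU : chebU (k : ℤ) (phi x t) ≠ 0) : uF k x t (-1) = 0 := by
  simp [uF, chebU_neg_one, hU]

lemma uF_right (k : ℕ) (x t : ℝ) (hU : chebU (k : ℤ) (phi x t) ≠ 0) : uF k x t k = 0 := by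
  have : (k : ℤ) - 1 - k = -1 := by ring
  simp [uF, this, chebU_neg_one, hU]

lemma two_phi (x t : ℝ) (hx : x * (t - 1) ≠ 0) :
    x * (t - 1) * (2 * phi x t) = 1 - x * (t - 1) := by
  rw [phi, mul_assoc 2 x]
  generalize x * (t - 1) = y at *
  field_simp

lemma uF_rec (k : ℕ) (x t : ℝ) (hx : x * (t - 1) ≠ 0) (h3 : 1 - 3 * x * (t - 1) ≠ 0)
    (hU : chebU (k : ℤ) (phi x t) ≠ 0) (j : ℤ) :
    x * (t - 1) * (uF k x t (j - 1) + uF k x t j + uF k x t (j + 1)) = uF k x t j - 1 := by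
  have hp := two_phi x t hx
  have h1 := chebU_rec j (phi x t)
  have h2 := chebU_rec (k - 1 - j) (phi x t)
  have e1 : (k : ℤ) - 1 - (j - 1) = k - 1 - j + 1 := by ring
  have e2 : (k : ℤ) - 1 - (j + 1) = k - 1 - j - 1 := by ring
  simp only [uF, e1, e2]
  rw [mul_assoc 3] at *
  generalize x * (t - 1) = y at *
  generalize chebU (k : ℤ) (phi x t) = U at *
  generalize chebU (j + 1) (phi x t) = a1 at *
  generalize chebU (j - 1) (phi x t) = a2 at *
  generalize chebU j (phi x t) = a at *
  generalize chebU (k - 1 - j + 1) (phi x t) = b1 at *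
  generalize chebU (k - 1 - j - 1) (phi x t) = b2 at *
  generalize chebU (k - 1 - j) (phi x t) = b at *
  generalize phi x t = p at *
  obtain ⟨d, hd⟩ : ∃ d, d = 1 - 3 * y := ⟨_, rfl⟩
  rw [← hd] at h3 ⊢
  field_simp
  linear_combination U * hd + (-y) * h1 - y * h2 - (a + b) * hp

lemma uF_sum (k : ℕ) (x t : ℝ) (hx : x * (t - 1) ≠ 0) (h3 : 1 - 3 * x * (t - 1) ≠ 0)
    (hU : chebU (k : ℤ) (phi x t) ≠ 0) :
    ∑ i : Fin k, uF k x t (i : ℕ) = gam k x t := by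
  rw [Fin.sum_univ_eq_sum_range (fun i : ℕ => uF k x t (i : ℤ)) k]
  have hp := two_phi x t hx
  have hs := chebU_sum k (phi x t)
  have hr : ∑ i ∈ Finset.range k, chebU ((k : ℤ) - 1 - i) (phi x t)
      = ∑ i ∈ Finset.range k, chebU (i : ℤ) (phi x t) := by
    rw [← Finset.sum_range_reflect (fun i : ℕ => chebU (i : ℤ) (phi x t))]
    refine Finset.sum_congr rfl fun i hi => ?_
    simp at hi
    congr 1
    omega
  simp only [uF, gam]
  rw [← Finset.sum_div, Finset.sum_sub_distrib, ← Finset.sum_div, Finset.sum_add_distrib, hr, ← hs]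
  simp only [Finset.sum_const, Finset.card_range, nsmul_eq_mul, mul_one]
  rw [mul_assoc 3, mul_assoc 2] at *
  generalize x * (t - 1) = y at *
  generalize chebU (k : ℤ) (phi x t) = U at *
  generalize ∑ i ∈ Finset.range k, chebU (i : ℤ) (phi x t) = S at *
  generalize phi x t = p at *
  field_simp
  linear_combination (2 * S) * hp

/-- The two-variable generating function `F_k(x,t) = Σ_{n≥0} (Σ_{w∈[k]^n} t^{s(w)}) x^n`
satisfies `F_k(x,t) = 1/(1 - x·γ(x,t))`, as an identity of formal series, i.e. for all
(sufficiently small) `x` at which the right-hand side is defined. -/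
theorem gf_of_staircase_statistic (k : ℕ) (hk : 2 ≤ k) (t : ℝ) :
    ∃ ε > 0, ∀ x : ℝ, |x| < ε →
      x * (t - 1) ≠ 0 →
      1 - 3 * x * (t - 1) ≠ 0 →
      chebU (k : ℤ) (phi x t) ≠ 0 →
      1 - x * gam k x t ≠ 0 →
      ∑' n : ℕ, (∑ w : Fin n → Fin k, t ^ statS w) * x ^ n = 1 / (1 - x * gam k x t) := by
  have hk0 : (0 : ℝ) < k := by exact_mod_cast (by omega : 0 < k)
  have hC : 0 < k * (1 + |t|) := by positivity
  refine ⟨1 / (k * (1 + |t|)), by positivity, fun x hx hxt h3 hU hg => ?_⟩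
  have hx0 : x ≠ 0 := left_ne_zero_of_mul hxt
  have hr : k * (1 + |t|) * |x| < 1 := by
    rw [lt_div_iff₀ hC] at hx; linarith
  have hsA : ∀ a : Fin k, Summable fun n : ℕ => aW k t n a * x ^ n := by
    intro a
    refine Summable.of_norm_bounded (summable_geometric_of_lt_one (by positivity) hr) fun n => ?_
    rw [Real.norm_eq_abs, abs_mul, abs_pow, mul_pow]
    exact mul_le_mul_of_nonneg_right (aW_bound k t n a) (by positivity)
  set S : ℕ → ℝ := fun n => ∑ w : Fin n → Fin k, t ^ statS w with hS
  set b : ℕ → ℝ := fun n => ∑ i : Fin k, uF k x t (i : ℕ) * aW k t n i with hb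
  have hS1 : ∀ n, S (n + 1) = ∑ a, aW k t n a := fun n => sum_aW k t n
  have hS0 : S 0 = 1 := by simp [hS, statS]
  have hb0 : b 0 = gam k x t := by
    simp only [hb, aW_zero, mul_one]; exact uF_sum k x t hxt h3 hU
  have hrec : ∀ n, x * b (n + 1) = x * gam k x t * S (n + 1) + b n - S (n + 1) := by
    intro n
    have key : ∀ i : Fin k, aW k t (n + 1) i = S (n + 1) + ∑ j : Fin k,
        (t - 1) * ((if |((j : ℕ) : ℤ) - ((i : ℕ) : ℤ)| ≤ 1 then 1 else 0) * aW k t n j) := by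
      intro i
      rw [aW_succ, hS1, ← Finset.sum_add_distrib]
      refine Finset.sum_congr rfl fun j _ => ?_
      split_ifs <;> ring
    have e : b (n + 1) = gam k x t * S (n + 1) + ∑ j : Fin k, (t - 1) *
        (∑ i : Fin k, (if |((j : ℕ) : ℤ) - ((i : ℕ) : ℤ)| ≤ 1 then uF k x t (i : ℕ) else 0))
          * aW k t n j := by
      simp only [hb, key, mul_add, Finset.sum_add_distrib, ← Finset.sum_mul]
      rw [uF_sum k x t hxt h3 hU]
      congr 1
      simp only [Finset.mul_sum, Finset.sum_mul]
      rw [Finset.sum_comm]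
      refine Finset.sum_congr rfl fun j _ => Finset.sum_congr rfl fun i _ => ?_
      split_ifs <;> ring
    rw [e, mul_add, ← mul_assoc, add_sub_assoc]
    congr 1
    rw [Finset.mul_sum, hS1, hb, ← Finset.sum_sub_distrib]
    refine Finset.sum_congr rfl fun j _ => ?_
    rw [sum_adj k (uF k x t) (uF_left k x t hU) (uF_right k x t hU)]
    have := uF_rec k x t hxt h3 hU (j : ℕ)
    linear_combination aW k t n j * this
  have hsb : Summable fun n => b n * x ^ n := by
    simp only [hb, Finset.sum_mul, mul_assoc]
    exact summable_sum fun i _ => (hsA i).mul_left _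
  have hsS1 : Summable fun n => S (n + 1) * x ^ (n + 1) := by
    simp only [hS1, Finset.sum_mul, pow_succ, ← mul_assoc]
    exact summable_sum fun i _ => (hsA i).mul_right _
  have hsS : Summable fun n => S n * x ^ n := (summable_nat_add_iff 1).1 hsS1
  have hsb1 : Summable fun n => b (n + 1) * x ^ (n + 1) := (summable_nat_add_iff 1).2 hsb
  have hB := hsb.tsum_eq_zero_add
  have hF := hsS.tsum_eq_zero_add
  have hmain : x * ∑' n, b (n + 1) * x ^ (n + 1)
      = (x * gam k x t - 1) * ∑' n, S (n + 1) * x ^ (n + 1) + x * ∑' n, b n * x ^ n := by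
    rw [← tsum_mul_left, ← tsum_mul_left, ← tsum_mul_left,
      ← (hsS1.mul_left _).tsum_add (hsb.mul_left _)]
    refine tsum_congr fun n => ?_
    rw [pow_succ]
    linear_combination (x ^ n * x) * hrec n
  change ∑' n, S n * x ^ n = _
  rw [eq_div_iff hg]
  rw [hb0] at hB
  rw [hS0] at hF
  simp only [pow_zero, mul_one] at hB hF
  linear_combination (1 - x * gam k x t) * hF + hmain + x * hB
end

section
/- Let k ≥ 2 be an integer. Set φ = (1 - x(t-1))/(2x(t-1)) and γ(x,t) = k/(1 - 3x(t-1)) - (2x(t-1)/(1 - 3x(t-1))²)·(U_k(φ) - U_{k-1}(φ) - 1)/U_k(φ). Then the two-variable generating function G_k(x,t) = Σ_{n≥0} (Σ_{w∈[k]^n} t^{cs(w)}) x^n satisfies G_k(x,t) = 1 + ((1 + 3x(t-1))/((1 - 3x(t-1))(1 + x(t-1)))) · [ 1/(1 - xγ(x,t)) - (2x(t-1)(k+1)/((1 + 3x(t-1))·U_k(φ))) · ( (1 - x(1 + k - U_k(φ))/(1 - 3x(t-1)))/(1 - xγ(x,t)) + U_{k-1}(φ) - 1 ) + kx(t-1)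 - 1 ], valid wherever the right-hand side is defined. -/
/-- The cyclic statistic `cs(w)`: the number of indices `0 ≤ i ≤ n-1` with
`|w_{i+1} - w_i| ≤ 1`, where `w_0` is interpreted as `w_n`; equivalently, the number of
cyclically adjacent pairs of letters of `w` differing by at most `1`. -/
def statCS {k n : ℕ} (w : Fin n → Fin k) : ℕ :=
  (Finset.univ.filter fun i : Fin n =>
    |((w ⟨((i : ℕ) + 1) % n, Nat.mod_lt _ i.pos⟩ : ℕ) : ℤ) - ((w i : ℕ) : ℤ)| ≤ 1).card

/-- The transfer matrix. -/
def csMat (k : ℕ) (t : ℝ) : Matrix (Fin k) (Fin k) ℝ :=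
  fun i j => if |((j : ℕ) : ℤ) - ((i : ℕ) : ℤ)| ≤ 1 then t else 1

lemma cs_pow_entry {k : ℕ} (M : Matrix (Fin k) (Fin k) ℝ) (n : ℕ) : ∀ a b : Fin k,
    (M ^ (n + 1)) a b = ∑ w : Fin n → Fin k, ∏ i : Fin (n + 1),
      M ((Fin.cons a w : Fin (n + 1) → Fin k) i) ((Fin.snoc w b : Fin (n + 1) → Fin k) i) := by
  induction n with
  | zero => 
    intro a b
    simp [Fin.snoc]
  | succ n ih =>
    intro a b
    rw [pow_succ', Matrix.mul_apply, ← (Fin.consEquiv (fun _ : Fin (n + 1) => Fin k)).sum_comp,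
      Fintype.sum_prod_type]
    refine Finset.sum_congr rfl fun c _ => ?_
    rw [ih, Finset.mul_sum]
    refine Finset.sum_congr rfl fun w _ => ?_
    conv_rhs => rw [Fin.prod_univ_succ]
    simp only [Fin.consEquiv, Equiv.coe_fn_mk, Fin.cons_succ, Fin.cons_zero,
      ← Fin.cons_snoc_eq_snoc_cons]

lemma cs_trace {k : ℕ} (t : ℝ) (n : ℕ) :
    ∑ w : Fin (n + 1) → Fin k, t ^ statCS w = (csMat k t ^ (n + 1)).trace := by
  rw [Matrix.trace, ← (Fin.consEquiv (fun _ : Fin (n + 1) => Fin k)).sum_comp,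
      Fintype.sum_prod_type]
  refine Finset.sum_congr rfl fun a _ => ?_
  rw [Matrix.diag_apply, cs_pow_entry]
  refine Finset.sum_congr rfl fun w _ => ?_
  rw [statCS, Finset.card_eq_sum_ones, Finset.sum_filter, ← Finset.prod_pow_eq_pow_sum]
  refine Finset.prod_congr rfl fun i _ => ?_
  have h : (Fin.cons a w : Fin (n + 1) → Fin k)
      ⟨((i : ℕ) + 1) % (n + 1), Nat.mod_lt _ i.pos⟩ = (Fin.snoc w a : Fin (n + 1) → Fin k) i := by
    refine Fin.lastCases ?_ (fun j => ?_) i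
    · simp
    · have : (⟨((j.castSucc : ℕ) + 1) % (n + 1), Nat.mod_lt _ (Fin.pos i)⟩ : Fin (n + 1))
          = j.succ := by
        ext; simp [Nat.mod_eq_of_lt]
      rw [this, Fin.cons_succ, Fin.snoc_castSucc]
  change (t ^ if |(((Fin.cons a w : Fin (n + 1) → Fin k) ⟨((i : ℕ) + 1) % (n + 1), Nat.mod_lt _ i.pos⟩ : ℕ) : ℤ)
    - (((Fin.cons a w : Fin (n + 1) → Fin k) i : ℕ) : ℤ)| ≤ 1 then 1 else 0) = csMat k t _ _
  unfold csMat
  rw [h]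
  split_ifs <;> simp

lemma cs_single {k : ℕ} (f : ℤ → ℝ) (h0 : f (-1) = 0) (hk : f k = 0) (c : ℤ) (hc : -1 ≤ c)
    (hc' : c ≤ k) : ∑ l : Fin k, (if ((l : ℕ) : ℤ) = c then f c else 0) = f c := by
  by_cases h : 0 ≤ c ∧ c < k
  · obtain ⟨m, rfl⟩ := Int.eq_ofNat_of_zero_le h.1
    have hm : m < k := by omega
    rw [Finset.sum_eq_single (⟨m, hm⟩ : Fin k)]
    · simp
    · intro b _ hb
      rw [if_neg]
      intro h2
      apply hb
      ext
      simpa using h2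
    · simp
  · have : c = -1 ∨ c = k := by omega
    rcases this with rfl | rfl <;> simp [h0, hk]

lemma cs_three {k : ℕ} (f : ℤ → ℝ) (h0 : f (-1) = 0) (hk : f k = 0) (i : Fin k) :
    ∑ l : Fin k, (if |((l : ℕ) : ℤ) - ((i : ℕ) : ℤ)| ≤ 1 then (1 : ℝ) else 0) * f (l : ℕ)
      = f ((i : ℕ) - 1) + f (i : ℕ) + f ((i : ℕ) + 1) := by
  have hi := i.2
  rw [← cs_single f h0 hk ((i : ℕ) - 1) (by omega) (by omega),
    ← cs_single f h0 hk ((i : ℕ) + 1) (by omega) (by omega)]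
  conv_rhs => rw [← cs_single f h0 hk (i : ℕ) (by omega) (by omega)]
  rw [← Finset.sum_add_distrib, ← Finset.sum_add_distrib]
  refine Finset.sum_congr rfl fun l _ => ?_
  by_cases h : |((l : ℕ) : ℤ) - ((i : ℕ) : ℤ)| ≤ 1
  · rw [if_pos h]
    rw [abs_le] at h
    have : ((l : ℕ) : ℤ) = (i : ℕ) - 1 ∨ ((l : ℕ) : ℤ) = (i : ℕ) ∨ ((l : ℕ) : ℤ) = (i : ℕ) + 1 := by
      omega
    rcases this with h | h | h <;> simp [h] <;> intro h' <;> omega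
  · rw [if_neg h]
    rw [abs_le] at h
    rw [if_neg (by omega), if_neg (by omega), if_neg (by omega)]
    simp

/-- Green function. -/
def csG (u : ℤ → ℝ) (k : ℕ) (i j : ℤ) : ℝ :=
  if i ≤ j then u i * u (k - 1 - j) else u j * u (k - 1 - i)

lemma csG_symm (u : ℤ → ℝ) (k : ℕ) (i j : ℤ) : csG u k i j = csG u k j i := by
  unfold csG
  rcases lt_trichotomy i j with h | h | h
  · rw [if_pos h.le, if_neg (by omega)]
  · subst h; rfl
  · rw [if_pos h.le, if_neg (by omega)]

lemma cs_wronsk {u : ℤ → ℝ} {c : ℝ} (hu : ∀ n, u (n + 1) = c * u n - u (n - 1))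
    (hm : u (-1) = 0) (h0 : u 0 = 1) (n : ℕ) : ∀ m : ℤ, u n * u m - u (n - 1) * u (m - 1) = u (n + m) := by
  induction n with
  | zero => intro m; simp [hm, h0]
  | succ n ih =>
    intro m
    have h1 := ih (m + 1)
    have h2 := hu n
    have h3 := hu m
    push_cast
    rw [show (n : ℤ) + 1 + m = n + (m + 1) by ring, ← h1, h2, h3]
    rw [show (n : ℤ) + 1 - 1 = n by ring, show m + 1 - 1 = m by ring]
    ring

lemma csG_three {u : ℤ → ℝ} {c : ℝ} (hu : ∀ n, u (n + 1) = c * u n - u (n - 1))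
    (hm : u (-1) = 0) (h0 : u 0 = 1) (k : ℕ) (i j : ℕ) (hi : i < k) (hj : j < k) :
    c * csG u k i j - csG u k (i - 1) j - csG u k (i + 1) j = if i = j then u k else 0 := by
  unfold csG
  rcases lt_trichotomy i j with h | h | h
  · rw [if_pos (by omega), if_pos (by omega), if_pos (by omega), if_neg (by omega), hu]
    ring
  · subst h
    rw [if_pos (by omega), if_pos (by omega), if_neg (by omega), if_pos rfl]
    have h1 := cs_wronsk hu hm h0 (i + 1) (k - 1 - i)
    rw [show ((i + 1 : ℕ) : ℤ) + (k - 1 - i) = k by push_cast; ring] at h1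
    rw [← h1]
    push_cast
    rw [hu, show (i : ℤ) + 1 - 1 = i by ring, show (k : ℤ) - 1 - (i + 1) = k - 1 - i - 1 by ring]
    ring
  · have h3 : (if (i : ℤ) - 1 ≤ j then u (i - 1) * u (k - 1 - j)
        else u j * u (k - 1 - (i - 1))) = u j * u (k - 1 - (i - 1)) := by
      split_ifs with h4
      · have : (i : ℤ) - 1 = j := by omega
        rw [this]
      · rfl
    rw [h3, if_neg (by omega), if_neg (by omega), if_neg (by omega)]
    have h1 := hu (k - 1 - i)
    rw [show (k : ℤ) - 1 - (i - 1) = k - 1 - i + 1 by ring, h1,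
       show (k : ℤ) - 1 - (i + 1) = k - 1 - i - 1 by ring]
    ring

lemma cs_inv {u : ℤ → ℝ} {c : ℝ} (hu : ∀ n, u (n + 1) = c * u n - u (n - 1))
    (hm : u (-1) = 0) (h0 : u 0 = 1) (k : ℕ) : u k ^ 2 - c * u k * u (k - 1) + u (k - 1) ^ 2 = 1 := by
  induction k with
  | zero => simp [hm, h0]
  | succ n ih =>
    push_cast
    rw [hu, show (n : ℤ) + 1 - 1 = n by ring, ← ih]
    ring

lemma cs_S1 {u : ℤ → ℝ} {c : ℝ} (hu : ∀ n, u (n + 1) = c * u n - u (n - 1))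
    (hm : u (-1) = 0) (h0 : u 0 = 1) (k : ℕ) : (c - 2) * ∑ i ∈ Finset.range k, u i = u k - u (k - 1) - 1 := by
  induction k with
  | zero => simp [hm, h0]
  | succ n ih =>
    rw [Finset.sum_range_succ, mul_add, ih]
    push_cast
    rw [hu, show (n : ℤ) + 1 - 1 = n by ring]
    ring

lemma cs_Q {u : ℤ → ℝ} {c : ℝ} (hu : ∀ n, u (n + 1) = c * u n - u (n - 1))
    (hm : u (-1) = 0) (h0 : u 0 = 1) (k : ℕ) :
    (c ^ 2 - 4) * ∑ i ∈ Finset.range k, u i ^ 2 = u k ^ 2 - u (k - 1) ^ 2 - 1 - 2 * k := by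
  induction k with
  | zero => simp [hm, h0]
  | succ n ih =>
    rw [Finset.sum_range_succ, mul_add, ih]
    have h := cs_inv hu hm h0 n
    push_cast
    rw [hu, show (n : ℤ) + 1 - 1 = n by ring]
    linear_combination (-2) * h

lemma cs_Wrec {u : ℤ → ℝ} {c : ℝ} (hu : ∀ n, u (n + 1) = c * u n - u (n - 1))
    (hm : u (-1) = 0) (h0 : u 0 = 1) (k : ℕ) : ∑ i ∈ Finset.range (k + 2), u i * u (k + 1 - i)
    = c * ∑ i ∈ Finset.range (k + 1), u i * u (k - i)
      - ∑ i ∈ Finset.range k, u i * u (k - 1 - i) + u (k + 1) := by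
  have hm2 : u (-1 - 1) = -1 := by
    have := hu (-1)
    norm_num at this ⊢
    rw [hm, h0] at this
    linarith
  have h : ∀ i : ℕ, u i * u ((k : ℤ) + 1 - i)
      = c * (u i * u (k - i)) - u i * u (k - 1 - i) := by
    intro i
    rw [show (k : ℤ) + 1 - i = (k - i) + 1 by ring, hu, show (k : ℤ) - 1 - i = k - i - 1 by ring]
    ring
  rw [Finset.sum_congr rfl (fun i _ => h i), Finset.sum_sub_distrib, ← Finset.mul_sum]
  rw [Finset.sum_range_succ _ (k + 1), Finset.sum_range_succ (fun i : ℕ => u i * u (k - 1 - i)) (k + 1),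
    Finset.sum_range_succ (fun i : ℕ => u i * u (k - 1 - i)) k]
  push_cast
  rw [show (k : ℤ) - (k + 1) = -1 by ring, show (k : ℤ) - 1 - k = -1 by ring,
    show (k : ℤ) - 1 - (k + 1) = -1 - 1 by ring, hm, hm2]
  ring

lemma cs_W {u : ℤ → ℝ} {c : ℝ} (hu : ∀ n, u (n + 1) = c * u n - u (n - 1))
    (hm : u (-1) = 0) (h0 : u 0 = 1) (k : ℕ) : (c ^ 2 - 4) * ∑ i ∈ Finset.range k, u i * u (k - 1 - i)
    = k * c * u k - 2 * (k + 1) * u (k - 1) := by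
  induction k using Nat.twoStepInduction with
  | zero => simp [hm]
  | one =>
    have := hu 0
    norm_num at this ⊢
    rw [this, hm, h0]
    ring
  | more n ih1 ih2 =>
    have h := cs_Wrec hu hm h0 n
    push_cast at ih2 ⊢
    simp only [add_sub_cancel_right] at ih2
    simp only [show (n : ℤ) + 2 - 1 = n + 1 by ring]
    rw [h]
    have h2 := hu (n + 1)
    have h1 := hu n
    rw [show (n : ℤ) + 1 + 1 = n + 2 by ring, show (n : ℤ) + 1 - 1 = n by ring] at h2
    rw [h2]
    linear_combination c * ih2 - ih1 + (2 * n + 2) * h1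

lemma cs_alg (x y p q k g D W Q S c : ℝ) (hy : y ≠ 0) (hp : p ≠ 0) (h1 : 1 - 3 * y ≠ 0)
    (h2 : 1 + y ≠ 0) (h3 : 1 + 3 * y ≠ 0) (hD : D ≠ 0) (hc : c = (1 - y) / y)
    (hDg : D = 1 - x * g)
    (hg : g = k / (1 - 3 * y) - 2 * y / (1 - 3 * y) ^ 2 * ((p - q - 1) / p))
    (hinv : p ^ 2 - c * p * q + q ^ 2 = 1)
    (hS : (c - 2) * S = p - q - 1)
    (hQ : (c ^ 2 - 4) * Q = p ^ 2 - q ^ 2 - 1 - 2 * k)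
    (hW : (c ^ 2 - 4) * W = k * c * p - 2 * (k + 1) * q) :
    1 - k + (W / (y * p) + x / D * ((k - 4 * S / p + (2 * Q + 2 * W) / p ^ 2) / (1 - 3 * y) ^ 2))
     = 1 + (1 + 3 * y) / ((1 - 3 * y) * (1 + y)) *
          (1 / D - 2 * y * (k + 1) / ((1 + 3 * y) * p) *
              ((1 - x * ((1 + k - p) / (1 - 3 * y))) / D + q - 1) + k * y - 1) := by
  have h1' : 1 - y * 3 ≠ 0 := by rwa [mul_comm]
  have h3' : 1 + y * 3 ≠ 0 := by rwa [mul_comm]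
  have hS' : S = y * (p - q - 1) / (1 - 3 * y) := by
    rw [← hS, hc]; field_simp; ring
  have hQ' : Q = y ^ 2 * (p ^ 2 - q ^ 2 - 1 - 2 * k) / ((1 - 3 * y) * (1 + y)) := by
    rw [← hQ, hc]; field_simp; ring
  have hW' : W = y * (k * (1 - y) * p - 2 * (k + 1) * y * q) / ((1 - 3 * y) * (1 + y)) := by
    have : k * (1 - y) * p - 2 * (k + 1) * y * q = y * (k * c * p - 2 * (k + 1) * q) := by
      rw [hc]; field_simp
    rw [this, ← hW, hc]; field_simp; ring
  have hinv' : y * p ^ 2 - (1 - y) * p * q + y * q ^ 2 - y = 0 := by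
    have : y * (p ^ 2 - c * p * q + q ^ 2) = y := by rw [hinv, mul_one]
    rw [hc] at this
    field_simp at this
    linarith
  have hβ : (k - 4 * S / p + (2 * Q + 2 * W) / p ^ 2) / (1 - 3 * y) ^ 2
      = (1 + 3 * y) / ((1 - 3 * y) * (1 + y)) * ((1 - 2 * y * (k + 1) / ((1 + 3 * y) * p)) * g
        + 2 * y * (k + 1) / ((1 + 3 * y) * p) * ((1 + k - p) / (1 - 3 * y))) := by
    rw [← sub_eq_zero]
    trans (-2 * y * (y * p ^ 2 - (1 - y) * p * q + y * q ^ 2 - y)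
      / (p ^ 2 * (1 - 3 * y) ^ 3 * (1 + y)))
    · rw [hS', hQ', hW', hg]
      field_simp
      ring
    · rw [hinv']; simp
  have hα : 1 - k + W / (y * p) = 1 + (1 + 3 * y) / ((1 - 3 * y) * (1 + y)) *
      (1 - 2 * y * (k + 1) / ((1 + 3 * y) * p) * (1 + q - 1) + k * y - 1) := by
    rw [hW']
    field_simp
    ring
  have h1D : 1 / D = 1 + x * g / D := by
    field_simp
    rw [hDg]; ring
  have h2D : (1 - x * ((1 + k - p) / (1 - 3 * y))) / D
      = 1 + x * g / D - x / D * ((1 + k - p) / (1 - 3 * y)) := by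
    rw [← h1D]; ring
  rw [← add_assoc, hα, hβ, h1D, h2D]
  ring

open Matrix in
lemma cs_resolvent (k : ℕ) (x t y c g : ℝ) (u : ℤ → ℝ) (hy : y = x * (t - 1)) (hy0 : y ≠ 0)
    (hc : c = (1 - y) / y) (h1 : 1 - 3 * y ≠ 0)
    (hu : ∀ n, u (n + 1) = c * u n - u (n - 1))
    (hm : u (-1) = 0) (h0 : u 0 = 1) (hp : u k ≠ 0)
    (hg : g = (k - 2 * (∑ i ∈ Finset.range k, u i) / u k) / (1 - 3 * y))
    (hD : 1 - x * g ≠ 0) (S : Matrix (Fin k) (Fin k) ℝ)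
    (hS : S * (1 - x • csMat k t) = 1) :
    S.trace = (∑ i ∈ Finset.range k, u i * u (k - 1 - i)) / (y * u k)
      + x / (1 - x * g) * ((k - 4 * (∑ i ∈ Finset.range k, u i) / u k
        + (2 * (∑ i ∈ Finset.range k, u i ^ 2)
          + 2 * (∑ i ∈ Finset.range k, u i * u (k - 1 - i))) / u k ^ 2) / (1 - 3 * y) ^ 2) := by
  have h1' : 1 - y * 3 ≠ 0 := by rwa [mul_comm]
  have hcy : y * c = 1 - y := by rw [hc]; field_simp
  set A : Matrix (Fin k) (Fin k) ℝ :=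
    fun i l => if |((l : ℕ) : ℤ) - ((i : ℕ) : ℤ)| ≤ 1 then (1 : ℝ) else 0 with hA
  set e : Fin k → ℝ := fun _ => 1 with he
  set F : ℤ → ℝ := fun i => (1 - (u i + u (k - 1 - i)) / u k) / (1 - 3 * y) with hF
  set v : Fin k → ℝ := fun i => F (i : ℕ) with hv
  set R : Matrix (Fin k) (Fin k) ℝ := fun i j => csG u k (i : ℕ) (j : ℕ) / (y * u k) with hR
  have hAa : ∀ i l : Fin k,
    A i l = if |((l : ℕ) : ℤ) - ((i : ℕ) : ℤ)| ≤ 1 then (1 : ℝ) else 0 := fun _ _ => rfl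
  have hRa : ∀ i j : Fin k, R i j = csG u k (i : ℕ) (j : ℕ) / (y * u k) := fun _ _ => rfl
  have hM : 1 - x • csMat k t = (1 - y • A) - x • vecMulVec e e := by
    ext i j
    simp only [Matrix.sub_apply, Matrix.smul_apply, csMat, hAa, vecMulVec_apply, he, hy, smul_eq_mul]
    split_ifs <;> ring
  have hBR : (1 - y • A) * R = 1 := by
    ext i j
    have h3 := cs_three (fun l => csG u k l (j : ℕ) / (y * u k))
      (by
        have : (-1 : ℤ) ≤ (j : ℕ) := by omega
        simp [csG, this, hm])
      (by
        have : ¬ ((k : ℤ) ≤ (j : ℕ)) := by have := j.2; omega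
        simp [csG, this, hm]) i
    have h4 := csG_three hu hm h0 k i j i.2 j.2
    rw [Matrix.sub_mul, Matrix.one_mul, Matrix.smul_mul, Matrix.sub_apply, Matrix.smul_apply,
      Matrix.mul_apply, h3, Matrix.one_apply, smul_eq_mul]
    simp only [hR, Fin.ext_iff]
    have h5 : (if (i : ℕ) = j then (1 : ℝ) else 0) = (if (i : ℕ) = j then u k else 0) / u k := by
      split_ifs <;> simp [hp]
    rw [h5, ← h4]
    field_simp
    linear_combination (- csG u k (i : ℕ) (j : ℕ)) * hcy
  have hRB : R * (1 - y • A) = 1 := mul_eq_one_comm.mp hBR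
  have hBv : (1 - y • A) *ᵥ v = e := by
    ext i
    have h3 := cs_three F
      (by simp [hF, hm, hp])
      (by simp [hF, hm, hp]) i
    rw [Matrix.sub_mulVec, Matrix.one_mulVec, Matrix.smul_mulVec, Pi.sub_apply, Pi.smul_apply,
      Matrix.mulVec, dotProduct, h3, smul_eq_mul]
    have a1 := hu (i : ℕ)
    have a2 := hu (k - 1 - (i : ℕ))
    simp only [hv, hF, he]
    rw [show (k : ℤ) - 1 - ((i : ℕ) - 1) = k - 1 - (i : ℕ) + 1 by ring, a1, a2,
      show (k : ℤ) - 1 - ((i : ℕ) + 1) = k - 1 - (i : ℕ) - 1 by ring]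
    field_simp
    linear_combination (u (i : ℕ) + u (k - 1 - (i : ℕ))) * hcy
  have hRe : R *ᵥ e = v := by
    rw [← hBv, Matrix.mulVec_mulVec, hRB, Matrix.one_mulVec]
  have hRT : Rᵀ = R := by
    ext i j
    simp only [Matrix.transpose_apply, hRa]
    rw [csG_symm]
  have heR : e ᵥ* R = v := by
    rw [← hRe, ← Matrix.mulVec_transpose, hRT]
  have hrefl : ∀ f : ℤ → ℝ, ∑ i ∈ Finset.range k, f (k - 1 - i) = ∑ i ∈ Finset.range k, f i := by
    intro f
    rw [← Finset.sum_range_reflect (fun i : ℕ => f i)]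
    refine Finset.sum_congr rfl fun i hi => ?_
    rw [Finset.mem_range] at hi
    congr 1
    omega
  have hev : e ⬝ᵥ v = g := by
    rw [hg, dotProduct]
    simp only [he, one_mul, hv]
    rw [Fin.sum_univ_eq_sum_range (fun i : ℕ => F i) k]
    simp only [hF]
    rw [← Finset.sum_div, Finset.sum_sub_distrib, ← Finset.sum_div, Finset.sum_add_distrib, hrefl u]
    simp
    ring
  have hC : (1 - x • csMat k t) * (R + (x / (1 - x * g)) • vecMulVec v v) = 1 := by
    rw [hM, Matrix.sub_mul, Matrix.mul_add, Matrix.mul_add, hBR, Matrix.mul_smul,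
      Matrix.mul_vecMulVec, hBv, Matrix.smul_mul, Matrix.smul_mul, Matrix.vecMulVec_mul, heR,
      Matrix.mul_smul, Matrix.vecMulVec_mul_vecMulVec, hev]
    ext i j
    simp only [Matrix.sub_apply, Matrix.add_apply, Matrix.smul_apply, vecMulVec_apply, he, 
      Pi.smul_apply, smul_eq_mul]
    field_simp
    ring
  have hSC : S = R + (x / (1 - x * g)) • vecMulVec v v := by
    calc S = S * ((1 - x • csMat k t) * (R + (x / (1 - x * g)) • vecMulVec v v)) := by
          rw [hC, mul_one]
      _ = _ := by rw [← mul_assoc, hS, one_mul]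
  rw [hSC, Matrix.trace_add, Matrix.trace_smul, smul_eq_mul]
  congr 1
  · rw [Matrix.trace]
    simp only [Matrix.diag_apply, hRa, csG, le_refl, if_true]
    rw [Fin.sum_univ_eq_sum_range (fun i : ℕ => u i * u (k - 1 - i) / (y * u k)) k,
      Finset.sum_div]
  · congr 1
    rw [Matrix.trace]
    simp only [Matrix.diag_apply, vecMulVec_apply, hv]
    rw [Fin.sum_univ_eq_sum_range (fun i : ℕ => F i * F i) k]
    have hterm : ∀ i : ℕ, F i * F i = (1 - 2 * u i / u k - 2 * u (k - 1 - i) / u k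
        + (u i ^ 2 + u (k - 1 - i) ^ 2 + 2 * (u i * u (k - 1 - i))) / u k ^ 2)
          / (1 - 3 * y) ^ 2 := by
      intro i
      simp only [hF]
      field_simp
      ring
    simp only [hterm]
    rw [← Finset.sum_div, Finset.sum_add_distrib, Finset.sum_sub_distrib, Finset.sum_sub_distrib,
      ← Finset.sum_div, ← Finset.sum_div, ← Finset.sum_div, Finset.sum_add_distrib,
      Finset.sum_add_distrib, ← Finset.mul_sum, ← Finset.mul_sum, ← Finset.mul_sum, hrefl u,
      hrefl (fun i => u i ^ 2)]
    simp
    ring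

attribute [local instance] Matrix.linftyOpNormedRing Matrix.linftyOpNormedAlgebra in
lemma cs_series (k : ℕ) (t : ℝ) : ∃ ε > 0, ∀ x : ℝ, |x| < ε →
    ∃ S : Matrix (Fin k) (Fin k) ℝ, S * (1 - x • csMat k t) = 1 ∧
      ∑' n : ℕ, (∑ w : Fin n → Fin k, t ^ statCS w) * x ^ n = 1 - k + S.trace := by
  refine ⟨1 / (‖csMat k t‖ + 1), by positivity, fun x hx => ?_⟩
  have hn : ‖x • csMat k t‖ < 1 := by
    rw [norm_smul, Real.norm_eq_abs]
    rw [lt_div_iff₀ (by positivity)] at hx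
    nlinarith [abs_nonneg x]
  have hs := summable_geometric_of_norm_lt_one hn
  refine ⟨∑' n : ℕ, (x • csMat k t) ^ n, geom_series_mul_neg _ hn, ?_⟩
  have h1 : HasSum (fun n : ℕ => ((x • csMat k t) ^ n).trace)
      (∑' n : ℕ, (x • csMat k t) ^ n).trace :=
    hs.hasSum.map (Matrix.traceAddMonoidHom (Fin k) ℝ) (by
      exact Continuous.matrix_trace continuous_id)
  have h2 : HasSum (fun n : ℕ => if n = 0 then (1 - k : ℝ) else 0) (1 - k) :=
    hasSum_ite_eq 0 _
  rw [← (h2.add h1).tsum_eq]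
  refine tsum_congr fun n => ?_
  rcases n with _ | n
  · simp [statCS]
  · rw [cs_trace, smul_pow, Matrix.trace_smul]
    simp [mul_comm]

/-- The two-variable generating function `G_k(x,t) = Σ_{n≥0} (Σ_{w∈[k]^n} t^{cs(w)}) x^n`
satisfies the stated closed-form identity, as an identity of formal series, i.e. for all
(sufficiently small) `x` at which the right-hand side is defined. -/
theorem gf_of_cyclic_staircase_statistic (k : ℕ) (hk : 2 ≤ k) (t : ℝ) :
    ∃ ε > 0, ∀ x : ℝ, |x| < ε →
      x * (t - 1) ≠ 0 →
      1 - 3 * x * (t - 1) ≠ 0 →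
      1 + x * (t - 1) ≠ 0 →
      1 + 3 * x * (t - 1) ≠ 0 →
      chebU (k : ℤ) (phi x t) ≠ 0 →
      1 - x * gam k x t ≠ 0 →
      ∑' n : ℕ, (∑ w : Fin n → Fin k, t ^ statCS w) * x ^ n =
        1 + (1 + 3 * x * (t - 1)) / ((1 - 3 * x * (t - 1)) * (1 + x * (t - 1))) *
          (1 / (1 - x * gam k x t) -
            2 * x * (t - 1) * (k + 1) / ((1 + 3 * x * (t - 1)) * chebU (k : ℤ) (phi x t)) *
              ((1 - x * ((1 + k - chebU (k : ℤ) (phi x t)) / (1 - 3 * x * (t - 1)))) /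
                  (1 - x * gam k x t) +
                chebU ((k : ℤ) - 1) (phi x t) - 1) +
            k * x * (t - 1) - 1) := by
  obtain ⟨ε, hε, H⟩ := cs_series k t
  refine ⟨ε, hε, fun x hx hy h1 h2 h3 hp hD => ?_⟩
  obtain ⟨S, hS, hsum⟩ := H x hx
  rw [hsum]
  have e1 : 3 * x * (t - 1) = 3 * (x * (t - 1)) := by ring
  have e2 : 2 * x * (t - 1) = 2 * (x * (t - 1)) := by ring
  have e3 : k * x * (t - 1) = k * (x * (t - 1)) := by ring
  have hgam : gam k x t = (k : ℝ) / (1 - 3 * (x * (t - 1))) -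
    2 * (x * (t - 1)) / (1 - 3 * (x * (t - 1))) ^ 2 *
      ((chebU (k : ℤ) (phi x t) - chebU ((k : ℤ) - 1) (phi x t) - 1)
        / chebU (k : ℤ) (phi x t)) := by
    rw [gam, e1, e2]
  rw [e1] at h1 h3 ⊢
  rw [e2, e3]
  have hφ : 2 * phi x t = (1 - x * (t - 1)) / (x * (t - 1)) := by
    rw [phi, e2]; field_simp
  generalize hyy : x * (t - 1) = y at *
  have hu : ∀ n : ℤ, chebU (n + 1) (phi x t)
      = 2 * phi x t * chebU n (phi x t) - chebU (n - 1) (phi x t) := by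
    intro n
    have := Polynomial.Chebyshev.U_add_two ℝ (n - 1)
    rw [show n - 1 + 2 = n + 1 by ring, show n - 1 + 1 = n by ring] at this
    simp [chebU, this]
  have hm : chebU (-1) (phi x t) = 0 := by simp [chebU]
  have h0 : chebU 0 (phi x t) = 1 := by simp [chebU]
  have iS := cs_S1 (u := fun n => chebU n (phi x t)) hu hm h0 k
  have h1' : 1 - y * 3 ≠ 0 := by rwa [mul_comm]
  have hc2 : 2 * phi x t - 2 = (1 - 3 * y) / y := by
    rw [hφ]; field_simp; ring
  have hg' : gam k x t = (k - 2 * (∑ i ∈ Finset.range k, chebU i (phi x t))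
      / chebU k (phi x t)) / (1 - 3 * y) := by
    rw [hgam, ← iS, hc2]
    field_simp
  rw [cs_resolvent k x t y (2 * phi x t) (gam k x t) (fun n => chebU n (phi x t)) hyy.symm hy hφ h1
    hu hm h0 hp hg' hD S hS]
  exact cs_alg x y _ _ k (gam k x t) _ _ _ _ _ hy hp h1 h2 h3 hD hφ rfl hgam
    (cs_inv (u := fun n => chebU n (phi x t)) hu hm h0 k) iS
    (cs_Q (u := fun n => chebU n (phi x t)) hu hm h0 k)
    (cs_W (u := fun n => chebU n (phi x t)) hu hm h0 k)
end

section
/- For every integer k ≥ 1 and every real number x with x² ≠ 1: Σ_{i=1}^{k} U_{i-1}(x)·U_i(x) = (2x·U_{2k}(x) - U_{2k-1}(x) - 2(k+1)x)/(4(x² - 1)). -/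
/-- Evaluation of the Chebyshev polynomial of the first kind `T_n` at a real `x`
(indices extended to all integers via the Chebyshev recurrence). -/
noncomputable def chebT (n : ℤ) (x : ℝ) : ℝ := (Polynomial.Chebyshev.T ℝ n).eval x

/-- `Z_n(x) = (U_n(x) - U_{n-1}(x) - 1)/(2(x - 1))`. -/
noncomputable def Zc (n : ℤ) (x : ℝ) : ℝ := (chebU n x - chebU (n - 1) x - 1) / (2 * (x - 1))

theorem chebU_rec_aux (n : ℤ) (x : ℝ) : chebU (n + 2) x = 2 * x * chebU (n + 1) x - chebU n x := by
  simp [chebU, Polynomial.Chebyshev.U_add_two]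

theorem chebU_aux (k : ℕ) (x : ℝ) :
    chebU ((k : ℤ) - 1) x ^ 2 + chebU k x ^ 2 - 2 * x * chebU ((k : ℤ) - 1) x * chebU k x = 1 ∧
    chebU (2 * (k : ℤ)) x = chebU k x ^ 2 - chebU ((k : ℤ) - 1) x ^ 2 ∧
    chebU (2 * (k : ℤ) - 1) x =
      2 * chebU ((k : ℤ) - 1) x * chebU k x - 2 * x * chebU ((k : ℤ) - 1) x ^ 2 ∧
    4 * (x ^ 2 - 1) * ∑ i ∈ Finset.Icc (1 : ℤ) (k : ℤ), chebU (i - 1) x * chebU i x =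
      2 * x * chebU (2 * (k : ℤ)) x - chebU (2 * (k : ℤ) - 1) x - 2 * (k + 1) * x := by
  induction k with
  | zero => simp [chebU]
  | succ k ih =>
    obtain ⟨h1, h2, h3, h4⟩ := ih
    have e1 := chebU_rec_aux ((k : ℤ) - 1) x
    have e2 := chebU_rec_aux (2 * (k : ℤ) - 1) x
    have e3 := chebU_rec_aux (2 * (k : ℤ)) x
    have hs : Finset.Icc (1 : ℤ) ((k : ℤ) + 1) = insert ((k : ℤ) + 1) (Finset.Icc (1 : ℤ) k) := by
      ext i
      simp only [Finset.mem_Icc, Finset.mem_insert]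
      omega
    have hn : (k : ℤ) + 1 ∉ Finset.Icc (1 : ℤ) k := by simp
    push_cast
    rw [hs, Finset.sum_insert hn]
    rw [h2, h3] at h4
    rw [show (k : ℤ) - 1 + 2 = k + 1 by ring, show (k : ℤ) - 1 + 1 = k by ring] at e1
    rw [show 2 * (k : ℤ) - 1 + 2 = 2 * k + 1 by ring, show 2 * (k : ℤ) - 1 + 1 = 2 * k by ring] at e2
    rw [show (k : ℤ) + 1 - 1 = k by ring, show 2 * ((k : ℤ) + 1) = 2 * k + 2 by ring,
      show 2 * (k : ℤ) + 2 - 1 = 2 * k + 1 by ring, e3, e2, e1, h2, h3]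
    refine ⟨?_, ?_, ?_, ?_⟩
    · linear_combination h1
    · ring
    · ring
    · linear_combination h4 - 2 * x * h1

/-- `Σ_{i=1}^{k} U_{i-1}(x)·U_i(x) = (2x·U_{2k}(x) - U_{2k-1}(x) - 2(k+1)x)/(4(x² - 1))`. -/
theorem sum_U_pred_mul_U (k : ℕ) (hk : 1 ≤ k) (x : ℝ) (hx : x ^ 2 ≠ 1) :
    ∑ i ∈ Finset.Icc (1 : ℤ) (k : ℤ), chebU (i - 1) x * chebU i x =
      (2 * x * chebU (2 * (k : ℤ)) x - chebU (2 * (k : ℤ) - 1) x - 2 * (k + 1) * x) /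
        (4 * (x ^ 2 - 1)) := by
  have h : 4 * (x ^ 2 - 1) ≠ 0 := mul_ne_zero (by norm_num) (sub_ne_zero.mpr hx)
  rw [eq_div_iff h, mul_comm]
  exact (chebU_aux k x).2.2.2
end

section
/- For every integer k ≥ 1 and every real number x with x ≠ 0 and x² ≠ 1: Σ_{i=1}^{k} U_i(x)²·U_{k-i-2}(x)·U_{k-i}(x) = (16x⁴ - 2(k+8)x² + 1)·U_{2k-1}(x)/(16x(x² - 1)²) + x·(2(-8x⁴ + 2(k+3)x² - k)·U_{2k}(x) + 2(2k+1)·T_2(x) + 2·T_4(x))/(16x(x² - 1)²). -/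
lemma exists_param (x : ℝ) (hx0 : x ≠ 0) (hx : x ^ 2 ≠ 1) :
    ∃ z : ℂ, z ≠ 0 ∧ z ^ 2 - 1 ≠ 0 ∧ z ^ 2 + 1 ≠ 0 ∧ (x : ℂ) = (z ^ 2 + 1) / (2 * z) := by
  obtain ⟨s, hs⟩ := IsAlgClosed.exists_pow_nat_eq ((x : ℂ) ^ 2 - 1) (n := 2) (by norm_num)
  have hs0 : s ≠ 0 := by
    rintro rfl
    apply hx
    have : (x : ℂ) ^ 2 = 1 := by linear_combination -hs
    exact_mod_cast this
  have hxc : (x : ℂ) ≠ 0 := by exact_mod_cast hx0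
  have hq : ((x : ℂ) + s) ^ 2 + 1 = 2 * x * (x + s) := by linear_combination hs
  have hz : (x : ℂ) + s ≠ 0 := by
    intro h
    rw [h] at hq
    norm_num at hq
  refine ⟨x + s, hz, ?_, ?_, ?_⟩
  · have : ((x : ℂ) + s) ^ 2 - 1 = 2 * s * (x + s) := by linear_combination -hs
    rw [this]
    exact mul_ne_zero (mul_ne_zero two_ne_zero hs0) hz
  · rw [hq]
    exact mul_ne_zero (mul_ne_zero two_ne_zero hxc) hz
  · rw [hq]
    field_simp

lemma chebU_add_two (x : ℝ) (n : ℤ) :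
    chebU (n + 2) x = 2 * x * chebU (n + 1) x - chebU n x := by
  simp [chebU, Polynomial.Chebyshev.U_add_two]

lemma chebU_param (x : ℝ) (z : ℂ) (h0 : z ≠ 0) (h1 : z ^ 2 - 1 ≠ 0)
    (hx : (x : ℂ) = (z ^ 2 + 1) / (2 * z)) (n : ℤ) :
    (chebU n x : ℂ) = (z ^ n * z ^ 2 - (z ^ n)⁻¹) / (z ^ 2 - 1) := by
  induction n using Polynomial.Chebyshev.induct with
  | zero => simp [chebU]; field_simp
  | one => simp [chebU, hx]; field_simp; ring
  | add_two n ih1 ih2 =>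
    rw [chebU_add_two]
    push_cast
    rw [ih1, ih2, hx]
    have hz : z ^ (n : ℤ) ≠ 0 := zpow_ne_zero _ h0
    have e2 : z ^ ((n : ℤ) + 2) = z ^ (n : ℤ) * z ^ 2 := by
      rw [zpow_add₀ h0]; norm_cast
    rw [e2, zpow_add_one₀ h0]
    generalize z ^ (n : ℤ) = Z at *
    field_simp
    ring
  | neg_add_one n ih1 ih2 =>
    have := chebU_add_two x (-(n : ℤ) - 1)
    have e : chebU (-(n : ℤ) - 1) x = 2 * x * chebU (-n) x - chebU (-n + 1) x := by
      rw [show -(n : ℤ) - 1 + 2 = -n + 1 by ring, show -(n : ℤ) - 1 + 1 = -n by ring] at this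
      linear_combination this
    rw [e]
    push_cast
    rw [ih1, ih2, hx]
    have hz : z ^ (-(n : ℤ)) ≠ 0 := zpow_ne_zero _ h0
    rw [zpow_sub_one₀ h0, zpow_add_one₀ h0]
    generalize z ^ (-(n : ℤ)) = Z at *
    field_simp
    ring

/-- Closed form of the partial sums, in terms of `W = z^k`, `Z = z^m`. -/
noncomputable def partF (z W Z m : ℂ) : ℂ :=
  (z ^ 4 / (z ^ 2 - 1) ^ 4) *
    (m * (W ^ 2 * z ^ 2 + (W ^ 2)⁻¹ * (z ^ 2)⁻¹ + 2 * (z ^ 2 + (z ^ 2)⁻¹))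
      + (-(z ^ 4 + 1) - 2 * (W ^ 2)⁻¹) * ((Z ^ 2 * z ^ 2 - z ^ 2) / (z ^ 2 - 1))
      + (-(1 + (z ^ 4)⁻¹) - 2 * W ^ 2) * ((1 - (Z ^ 2)⁻¹) / (z ^ 2 - 1))
      + (W ^ 2)⁻¹ * z ^ 2 * ((Z ^ 4 * z ^ 4 - z ^ 4) / ((z ^ 2 - 1) * (z ^ 2 + 1)))
      + W ^ 2 * (z ^ 2)⁻¹ * ((1 - (Z ^ 4)⁻¹) / ((z ^ 2 - 1) * (z ^ 2 + 1))))

lemma partial_sum (x : ℝ) (z : ℂ) (h0 : z ≠ 0) (h1 : z ^ 2 - 1 ≠ 0) (h2 : z ^ 2 + 1 ≠ 0)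
    (hx : (x : ℂ) = (z ^ 2 + 1) / (2 * z)) (k : ℤ) (m : ℕ) :
    ∑ i ∈ Finset.Icc (1 : ℤ) (m : ℤ),
        (chebU i x : ℂ) ^ 2 * chebU (k - i - 2) x * chebU (k - i) x =
      partF z (z ^ k) (z ^ m) m := by
  induction m with
  | zero => simp [partF]
  | succ m ih =>
    have hI : Finset.Icc (1 : ℤ) ((m + 1 : ℕ) : ℤ) = insert ((m : ℤ) + 1) (Finset.Icc 1 (m : ℤ)) := by
      ext j
      simp only [Finset.mem_Icc, Finset.mem_insert]
      omega
    rw [hI, Finset.sum_insert (by simp), ih]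
    simp only [chebU_param x z h0 h1 hx]
    have hW : z ^ k ≠ 0 := zpow_ne_zero _ h0
    have hZ : z ^ m ≠ 0 := pow_ne_zero _ h0
    have e1 : z ^ ((m : ℤ) + 1) = z ^ m * z := by rw [zpow_add_one₀ h0, zpow_natCast]
    have e2 : z ^ (k - ((m : ℤ) + 1)) = z ^ k / (z ^ m * z) := by rw [zpow_sub₀ h0, e1]
    have e3 : z ^ (k - ((m : ℤ) + 1) - 2) = z ^ k / (z ^ m * z) / z ^ 2 := by
      rw [zpow_sub₀ h0, e2]; norm_cast
    rw [e1, e2, e3, pow_succ z m]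
    push_cast
    generalize z ^ k = W at *
    generalize z ^ m = Z at *
    generalize (m : ℂ) = M
    unfold partF
    field_simp
    ring

/-- `Σ_{i=1}^{k} U_i(x)²·U_{k-i-2}(x)·U_{k-i}(x)` in closed form (identity `q₂₁`). -/
theorem sum_q21 (k : ℕ) (hk : 1 ≤ k) (x : ℝ) (hx0 : x ≠ 0) (hx : x ^ 2 ≠ 1) :
    ∑ i ∈ Finset.Icc (1 : ℤ) (k : ℤ),
        chebU i x ^ 2 * chebU ((k : ℤ) - i - 2) x * chebU ((k : ℤ) - i) x =
      (16 * x ^ 4 - 2 * (k + 8) * x ^ 2 + 1) * chebU (2 * (k : ℤ) - 1) x /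
          (16 * x * (x ^ 2 - 1) ^ 2) +
        x * (2 * (-8 * x ^ 4 + 2 * (k + 3) * x ^ 2 - k) * chebU (2 * (k : ℤ)) x +
              2 * (2 * k + 1) * chebT 2 x + 2 * chebT 4 x) /
          (16 * x * (x ^ 2 - 1) ^ 2) := by
  obtain ⟨z, h0, h1, h2, hz⟩ := exists_param x hx0 hx
  have hP := partial_sum x z h0 h1 h2 hz (k : ℤ) k
  have hT2 : chebT 2 x = 2 * x ^ 2 - 1 := by
    simp [chebT, Polynomial.Chebyshev.T_two]
  have hT4 : chebT 4 x = 8 * x ^ 4 - 8 * x ^ 2 + 1 := by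
    have h3 := Polynomial.Chebyshev.T_add_two ℝ 1
    have h4 := Polynomial.Chebyshev.T_add_two ℝ 2
    norm_num at h3 h4
    simp only [chebT, h4, h3, Polynomial.Chebyshev.T_two]
    simp
    ring
  apply Complex.ofReal_injective
  rw [hT2, hT4]
  push_cast
  rw [hP]
  simp only [chebU_param x z h0 h1 hz]
  have hZ : z ^ k ≠ 0 := pow_ne_zero _ h0
  have e1 : z ^ (2 * (k : ℤ)) = (z ^ k) ^ 2 := by
    rw [← pow_mul, mul_comm k 2]; norm_cast
  have e2 : z ^ (2 * (k : ℤ) - 1) = (z ^ k) ^ 2 / z := by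
    rw [zpow_sub_one₀ h0, e1, div_eq_mul_inv]
  have hd : (x : ℂ) ^ 2 - 1 = (z ^ 2 - 1) ^ 2 / (4 * z ^ 2) := by
    rw [hz]; field_simp; ring
  rw [e1, e2, hd, hz, zpow_natCast]
  generalize z ^ k = Z at *
  generalize (k : ℂ) = M
  unfold partF
  field_simp
  ring
end
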